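/- arXiv:2604.13325 — 3 statements merged into one kernel-verified Lean document; each statement's English description precedes it below -/
import Mathlib

section
/- Let T > 0 and ε > 0. Let f : ℝⁿ → ℝⁿ, g : ℝⁿ → ℝ^{n×m}, and h : ℝⁿ → ℝ be continuously differentiable. Let u : [0, T+ε) → ℝᵐ and x : [0, T+ε) → ℝⁿ satisfy ẋ_t = f(x_t) + g(x_t)u_t for all t ∈ [0, T+ε), and let p : [0, T] → ℝⁿ satisfy the adjoint equation ṗ_t = −(Df(x_t) + Σ_{i=1}^{m} (u_t)_i Dg_i(x_t))ᵀ p_t for all t ∈ [0, T], where g_i denotes the i-th column of g and Df, Dg_i denote Jacobians. Let p⁰ ∈ {−1, 0} satisfy the terminal Hamiltonian condition ⟨p_T, f(x_T) + g(x_T)u_T⟩ = −p⁰. Assume: (i) h(x_T) = 0 and p_T = ∇h(x_T) with ∇h(x_T) ≠ 0; (ii) h(x_t) ≥ 0 for all t ∈ [0, T+ε). Then p⁰ = 0, i.e., the extremal is abnormal and ⟨∇h(x_T), f(x_T) + g(x_T)u_T⟩ = 0. -/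
open Set RealInnerProductSpace

/-- Corollary 1 (characterization of barely-staying trajectories): an extremal of the
minimum-time hitting problem for the control-affine system `ẋ = f(x) + g(x)u` whose state
trajectory stays in the safe set `S = {x : h x ≥ 0}` on `[0, T+ε)` and satisfies the PMP
terminal conditions `h(x_T) = 0`, `p_T = ∇h(x_T) ≠ 0`, and
`⟪p_T, f(x_T) + g(x_T)u_T⟫ = -p⁰` must be abnormal: `p⁰ = 0`, i.e.
`⟪∇h(x_T), f(x_T) + g(x_T)u_T⟫ = 0`. -/
theorem barely_staying_extremal_abnormal {n m : ℕ} (T ε : ℝ) (hT : 0 < T) (hε : 0 < ε)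
    (f : EuclideanSpace ℝ (Fin n) → EuclideanSpace ℝ (Fin n))
    (g : EuclideanSpace ℝ (Fin n) →
      (EuclideanSpace ℝ (Fin m) →L[ℝ] EuclideanSpace ℝ (Fin n)))
    (h : EuclideanSpace ℝ (Fin n) → ℝ)
    (hf : ContDiff ℝ 1 f) (hg : ContDiff ℝ 1 g) (hh : ContDiff ℝ 1 h)
    (u : ℝ → EuclideanSpace ℝ (Fin m))
    (x : ℝ → EuclideanSpace ℝ (Fin n))
    (p : ℝ → EuclideanSpace ℝ (Fin n))
    -- dynamics on [0, T+ε)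
    (hdyn : ∀ t ∈ Set.Ico (0 : ℝ) (T + ε), HasDerivAt x (f (x t) + g (x t) (u t)) t)
    -- adjoint equation ṗ = -(Df(x) + ∑ᵢ uᵢ Dgᵢ(x))ᵀ p on [0, T], where gᵢ is the i-th
    -- column of g and the transpose is the (real) adjoint of the Jacobian
    (hadj : ∀ t ∈ Set.Icc (0 : ℝ) T,
      HasDerivAt p
        (-(ContinuousLinearMap.adjoint
            (fderiv ℝ f (x t)
              + ∑ i : Fin m,
                  u t i • fderiv ℝ (fun y => g y (EuclideanSpace.single i 1)) (x t))
            (p t))) t)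
    (p0 : ℝ) (hp0 : p0 = -1 ∨ p0 = 0)
    -- terminal Hamiltonian condition ⟪p_T, f(x_T) + g(x_T)u_T⟫ = -p⁰
    (hham : ⟪p T, f (x T) + g (x T) (u T)⟫ = -p0)
    -- (i) h(x_T) = 0 and p_T = ∇h(x_T) ≠ 0
    (hxT : h (x T) = 0)
    (hgrad : HasGradientAt h (p T) (x T))
    (hgrad_ne : p T ≠ 0)
    -- (ii) safety on [0, T+ε)
    (hsafe : ∀ t ∈ Set.Ico (0 : ℝ) (T + ε), 0 ≤ h (x t)) :
    p0 = 0 ∧ ⟪p T, f (x T) + g (x T) (u T)⟫ = 0 := by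
  -- `t ↦ h (x t)` attains an interior local minimum, with value `0`, at `t = T`; by the chain
  -- rule its derivative there is the terminal Hamiltonian, which therefore vanishes.
  have hmin : IsLocalMin (h ∘ x) T := by
    filter_upwards [Ico_mem_nhds hT (lt_add_of_pos_right T hε)] with t ht
    simpa [hxT] using hsafe t ht
  have hder := hgrad.hasFDerivAt.comp_hasDerivAt T (hdyn T ⟨hT.le, lt_add_of_pos_right T hε⟩)
  have hzero : ⟪p T, f (x T) + g (x T) (u T)⟫ = 0 := by
    simpa only [InnerProductSpace.toDual_apply_apply] using hmin.hasDerivAt_eq_zero hder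
  exact ⟨by linarith, hzero⟩
end

section
/- Let h : ℝⁿ → ℝ be continuously differentiable on a neighborhood of a ∈ ℝⁿ with h(a) = 0 and Dh(a) ≠ 0 (i.e., h is a submersion at a). Then the tangent cone at a to the level set {x ∈ ℝⁿ : h(x) = 0} equals the kernel of the differential Dh(a); in particular, the tangent space to the safe-set boundary at a is the hyperplane {y ∈ ℝⁿ : ⟨∇h(a), y⟩ = 0} of dimension n − 1. -/
/-!
The inclusion `⊆` is uniqueness of derivatives along the tangent cone: on the level set `h` is
constant, so `0` is also a derivative of `h` within it, and two derivatives within a set agree on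
its tangent cone (`HasFDerivWithinAt.unique_on`).

For `⊇`, a nonzero functional is surjective, so the implicit function theorem parametrizes the
level set near `a` by a map `ψ` from a neighborhood of `0` in `ker Dh(a)`, with `ψ 0 = a` and
`Dψ(0)` the inclusion of the kernel. A differentiable map carries tangent cones into tangent cones
of images (`HasFDerivWithinAt.mapsTo_tangent_cone`), and the tangent cone of a neighborhood of `0`
in the kernel is the whole kernel.
-/

open Set

/-- If `h` is continuously differentiable near `a`, `h a = 0`, and `Dh(a) ≠ 0` (submersion),
then the tangent cone at `a` to the level set `{x : h x = 0}` equals the kernel of the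
differential `Dh(a)`, i.e. the hyperplane `{y : ⟪∇h(a), y⟫ = 0}`. -/
theorem tangentCone_levelSet_eq_ker {n : ℕ} (h : EuclideanSpace ℝ (Fin n) → ℝ)
    (a : EuclideanSpace ℝ (Fin n)) (hh : ContDiffAt ℝ 1 h a)
    (ha : h a = 0) (hD : fderiv ℝ h a ≠ 0) :
    tangentConeAt ℝ {x | h x = 0} a = {y | fderiv ℝ h a y = 0} := by
  have hs : HasStrictFDerivAt h (fderiv ℝ h a) a := hh.hasStrictFDerivAt one_ne_zero
  apply Subset.antisymm
  · intro y hy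
    have hzero : HasFDerivWithinAt h (0 : EuclideanSpace ℝ (Fin n) →L[ℝ] ℝ) {x | h x = 0} a :=
      (hasFDerivWithinAt_const (0 : ℝ) a _).congr (fun x hx => hx) ha
    exact hs.hasFDerivAt.hasFDerivWithinAt.unique_on hzero hy
  · intro y hy
    have hsurj : (fderiv ℝ h a).range = ⊤ :=
      LinearMap.range_eq_top.2 (LinearMap.surjective fun h0 =>
        hD (ContinuousLinearMap.coe_injective h0))
    set ψ := hs.implicitFunction h (fderiv ℝ h a) hsurj (h a)
    have hψ' : HasStrictFDerivAt ψ (fderiv ℝ h a).ker.subtypeL 0 := hs.to_implicitFunction hsurj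
    have hψ0 : ψ 0 = a := hs.implicitFunction_apply_image hsurj
    have hlevel : {v | h (ψ v) = 0} ∈ nhds (0 : (fderiv ℝ h a).ker) := by
      have hev := hs.map_implicitFunction_eq hsurj
      -- The neighborhood is one of pairs (value, kernel vector); slice it at the value `h a`.
      rw [nhds_prod_eq] at hev
      filter_upwards [hev.curry.self_of_nhds] with v hv
      exact hv.trans ha
    have hcone := HasFDerivWithinAt.mapsTo_tangent_cone
      (hψ'.hasFDerivAt.hasFDerivWithinAt (s := {v | h (ψ v) = 0}))
    rw [tangentConeAt_of_mem_nhds hlevel, hψ0] at hcone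
    exact tangentConeAt_mono (image_subset_iff.2 fun v hv => hv)
      (hcone (mem_univ (⟨y, hy⟩ : (fderiv ℝ h a).ker)))
end

section
/- Let h : ℝⁿ → ℝ be continuously differentiable, γ > 0, let f : ℝⁿ → ℝⁿ, g : ℝⁿ → ℝ^{n×m}, and ξ : ℝⁿ → ℝᵐ be such that the control barrier condition ⟨∇h(x), f(x) + g(x)ξ(x)⟩ ≥ −γ h(x) holds for all x ∈ ℝⁿ. If x : [0, ∞) → ℝⁿ is differentiable and satisfies the closed-loop dynamics ẋ_t = f(x_t) + g(x_t)ξ(x_t) for all t ≥ 0 with h(x_0) ≥ 0, then h(x_t) ≥ 0 for all t ≥ 0; that is, the closed-loop trajectory renders the safe set S = {x : h(x) ≥ 0} forward invariant. -/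
open Set RealInnerProductSpace

/-!
The integrating factor `exp (γ t)` turns the barrier condition into monotonicity: along a closed-loop
trajectory the derivative of `exp (γ t) * h (x t)` is
`exp (γ t) * (γ * h (x t) + ⟪∇h (x t), ẋ t⟫) ≥ 0`, so `exp (γ t) * h (x t) ≥ h (x 0) ≥ 0`.
-/

/-- CBFs and forward invariance: if the control barrier condition
`⟪∇h(x), f(x) + g(x)ξ(x)⟫ ≥ -γ h(x)` holds everywhere, then any closed-loop trajectory of
`ẋ = f(x) + g(x)ξ(x)` starting in the safe set `S = {x : h x ≥ 0}` remains in `S` forever. -/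
theorem cbf_forward_invariance {n m : ℕ} (γ : ℝ) (hγ : 0 < γ)
    (h : EuclideanSpace ℝ (Fin n) → ℝ) (hh : ContDiff ℝ 1 h)
    (f : EuclideanSpace ℝ (Fin n) → EuclideanSpace ℝ (Fin n))
    (g : EuclideanSpace ℝ (Fin n) →
      (EuclideanSpace ℝ (Fin m) →L[ℝ] EuclideanSpace ℝ (Fin n)))
    (ξ : EuclideanSpace ℝ (Fin n) → EuclideanSpace ℝ (Fin m))
    (hcbf : ∀ y, -γ * h y ≤ ⟪gradient h y, f y + g y (ξ y)⟫)
    (x : ℝ → EuclideanSpace ℝ (Fin n))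
    (hx : ∀ t, 0 ≤ t → HasDerivAt x (f (x t) + g (x t) (ξ (x t))) t)
    (h0 : 0 ≤ h (x 0)) :
    ∀ t, 0 ≤ t → 0 ≤ h (x t) := by
  have hder : ∀ t, 0 ≤ t → HasDerivAt (fun s => Real.exp (γ * s) * h (x s))
      (Real.exp (γ * t) * (γ * 1) * h (x t) +
        Real.exp (γ * t) * ⟪gradient h (x t), f (x t) + g (x t) (ξ (x t))⟫) t := by
    intro t ht
    have hgrad := ((hh.differentiable one_ne_zero) (x t)).hasGradientAt.hasFDerivAt
    have hcomp := hgrad.comp_hasDerivAt t (hx t ht)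
    rw [InnerProductSpace.toDual_apply_apply] at hcomp
    exact (((hasDerivAt_id t).const_mul γ).exp).mul hcomp
  have hmono : MonotoneOn (fun s => Real.exp (γ * s) * h (x s)) (Ici 0) := by
    refine monotoneOn_of_hasDerivWithinAt_nonneg (convex_Ici 0)
      (fun t ht => (hder t ht).continuousAt.continuousWithinAt)
      (fun t ht => (hder t (interior_subset ht)).hasDerivWithinAt) (fun t _ => ?_)
    have hb := mul_nonneg (Real.exp_pos (γ * t)).le (sub_nonneg.mpr (hcbf (x t)))
    linarith
  intro t ht
  have hle := hmono (mem_Ici.mpr le_rfl) (mem_Ici.mpr ht) ht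
  simp only [mul_zero, Real.exp_zero, one_mul] at hle
  exact nonneg_of_mul_nonneg_right (h0.trans hle) (Real.exp_pos _)
end
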